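/- Let N ≥ 3 be an integer, set 2* = 2N/(N−2), and let S = inf{ (∫_{ℝ^N} ‖∇φ‖² dx) / (∫_{ℝ^N} |φ|^{2*} dx)^{2/2*} : φ ∈ C_c^∞(ℝ^N), φ not identically zero } be the best Sobolev constant. Suppose v : ℝ^N → ℝ is a C² function, not identically zero, satisfying −Δv(x) = |v(x)|^{2*−2}·v(x) for all x ∈ ℝ^N, and suppose there exists C > 0 such that |v(x)| ≤ C·(1+‖x‖)^{−(N−2)} and ‖∇v(x)‖ ≤ C·(1+‖x‖)^{−(N−1)} for all x. Then ∫_{ℝ^N} ‖∇v‖² dx ≥ S^{N/2}. -/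

import Mathlib

open MeasureTheory Real

/-- The Laplacian of `u` at `x`: the trace of the second derivative,
computed as the sum of pure second derivatives along the coordinate directions. -/
noncomputable def lap {N : ℕ} (u : EuclideanSpace ℝ (Fin N) → ℝ)
    (x : EuclideanSpace ℝ (Fin N)) : ℝ :=
  ∑ i, iteratedFDeriv ℝ 2 u x ![EuclideanSpace.single i 1, EuclideanSpace.single i 1]

/-- The best Sobolev constant in dimension `N`. -/
noncomputable def sobolevConst (N : ℕ) : ℝ :=
  sInf { r : ℝ | ∃ φ : EuclideanSpace ℝ (Fin N) → ℝ,
    ContDiff ℝ (⊤ : ℕ∞) φ ∧ HasCompactSupport φ ∧ φ ≠ 0 ∧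
    r = (∫ x, ‖gradient φ x‖ ^ 2) /
      (∫ x, |φ x| ^ (2 * (N : ℝ) / ((N : ℝ) - 2)))
        ^ (2 / (2 * (N : ℝ) / ((N : ℝ) - 2))) }


open Filter Topology
open scoped Convolution Pointwise

lemma EQ.approx {N : ℕ} (w : EuclideanSpace ℝ (Fin N) → ℝ) (hw : ContDiff ℝ 1 w)
    (hc : HasCompactSupport w) :
    ∃ (u : ℕ → EuclideanSpace ℝ (Fin N) → ℝ) (K : Set (EuclideanSpace ℝ (Fin N))) (M : ℝ),
      IsCompact K ∧ 0 ≤ M ∧ (∀ n, ContDiff ℝ (⊤ : ℕ∞) (u n)) ∧ (∀ n, HasCompactSupport (u n)) ∧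
      (∀ n x, x ∉ K → u n x = 0) ∧ (∀ n x, x ∉ K → fderiv ℝ (u n) x = 0) ∧
      (∀ n x, |u n x| ≤ M) ∧ (∀ n x, ‖fderiv ℝ (u n) x‖ ≤ M) ∧
      (∀ x, Tendsto (fun n => u n x) atTop (𝓝 (w x))) ∧
      (∀ x, Tendsto (fun n => fderiv ℝ (u n) x) atTop (𝓝 (fderiv ℝ w x))) := by
  have hdc : Continuous (fderiv ℝ w) := hw.continuous_fderiv one_ne_zero
  have hds : HasCompactSupport (fderiv ℝ w) := hc.fderiv ℝ
  obtain ⟨M0, hM0⟩ := hw.continuous.bounded_above_of_compact_support hc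
  obtain ⟨M1, hM1⟩ := hdc.bounded_above_of_compact_support hds
  have h0 : 0 ≤ M0 := (norm_nonneg _).trans (hM0 0)
  have h1 : 0 ≤ M1 := (norm_nonneg _).trans (hM1 0)
  let φ : ℕ → ContDiffBump (0 : EuclideanSpace ℝ (Fin N)) := fun n =>
    ⟨1 / (2 * ((n : ℝ) + 1)), 1 / ((n : ℝ) + 1), by positivity, by
      apply one_div_lt_one_div_of_lt <;> linarith [(Nat.cast_nonneg n : (0:ℝ) ≤ n)]⟩
  have hr1 : ∀ n, (φ n).rOut ≤ 1 := fun n => by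
    show 1 / ((n : ℝ) + 1) ≤ 1
    rw [div_le_one (by positivity)]
    linarith [(Nat.cast_nonneg n : (0:ℝ) ≤ n)]
  have hr0 : Tendsto (fun n => (φ n).rOut) atTop (𝓝 0) := tendsto_one_div_add_atTop_nhds_zero_nat
  let u : ℕ → EuclideanSpace ℝ (Fin N) → ℝ := fun n =>
    (φ n).normed volume ⋆[ContinuousLinearMap.lsmul ℝ ℝ, volume] w
  have hfd : ∀ n x, fderiv ℝ (u n) x =
      ((φ n).normed volume ⋆[ContinuousLinearMap.lsmul ℝ ℝ, volume] (fderiv ℝ w)) x := by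
    intro n x
    have := (hc.hasFDerivAt_convolution_right (ContinuousLinearMap.lsmul ℝ ℝ) (μ := volume)
      ((φ n).integrable_normed (μ := volume)).locallyIntegrable hw x).fderiv
    rw [this]
    congr 1
  have hball : ∀ n x, x ∉ tsupport w + Metric.closedBall 0 1 →
      ∀ y ∈ Metric.ball x (φ n).rOut, y ∉ tsupport w := by
    intro n x hx y hy hyw
    apply hx
    refine Set.mem_add.2 ⟨y, hyw, x - y, ?_, by abel⟩
    rw [mem_closedBall_zero_iff, ← dist_eq_norm, dist_comm]
    exact (Metric.mem_ball.1 hy).le.trans (hr1 n)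
  have hz : ∀ y, y ∉ tsupport w → w y = 0 := fun y hy => image_eq_zero_of_notMem_tsupport hy
  have hzd : ∀ y, y ∉ tsupport w → fderiv ℝ w y = 0 := fun y hy =>
    fderiv_of_notMem_tsupport (𝕜 := ℝ) hy
  have hK : IsCompact (tsupport w + Metric.closedBall (0 : EuclideanSpace ℝ (Fin N)) 1) :=
    hc.isCompact.add (isCompact_closedBall 0 1)
  have hu0 : ∀ n x, x ∉ tsupport w + Metric.closedBall 0 1 → u n x = 0 := by
    intro n x hx
    have hb := hball n x hx
    have hx0 := hz x (hb x (Metric.mem_ball_self (φ n).rOut_pos))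
    show ((φ n).normed volume ⋆[ContinuousLinearMap.lsmul ℝ ℝ, volume] w) x = 0
    rw [(φ n).normed_convolution_eq_right (fun y hy => by rw [hz y (hb y hy), hx0]), hx0]
  refine ⟨u, tsupport w + Metric.closedBall 0 1, 3 * M0 + 3 * M1, hK, by positivity, ?_, ?_, hu0,
    ?_, ?_, ?_, ?_, ?_⟩
  · intro n
    exact ((φ n).hasCompactSupport_normed (μ := volume)).contDiff_convolution_left _
      (φ n).contDiff_normed hw.continuous.locallyIntegrable
  · intro n
    exact HasCompactSupport.intro hK (hu0 n)
  · intro n x hx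
    have hb := hball n x hx
    have hx0 := hzd x (hb x (Metric.mem_ball_self (φ n).rOut_pos))
    rw [hfd, (φ n).normed_convolution_eq_right (fun y hy => by rw [hzd y (hb y hy), hx0]), hx0]
  · intro n x
    have := (φ n).dist_normed_convolution_le (μ := volume) (x₀ := x) (ε := 2 * M0)
      hw.continuous.aestronglyMeasurable (fun y _ => by
        rw [dist_eq_norm]
        exact (norm_sub_le _ _).trans (by linarith [hM0 x, hM0 y]))
    have h2 : ‖u n x‖ ≤ ‖u n x - w x‖ + ‖w x‖ := by simpa using norm_add_le (u n x - w x) (w x)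
    rw [dist_eq_norm] at this
    rw [← Real.norm_eq_abs]
    have h3 := hM0 x
    change ‖u n x - w x‖ ≤ _ at this
    linarith
  · intro n x
    have := (φ n).dist_normed_convolution_le (μ := volume) (x₀ := x) (ε := 2 * M1)
      hdc.aestronglyMeasurable (fun y _ => by
        rw [dist_eq_norm]
        exact (norm_sub_le _ _).trans (by linarith [hM1 x, hM1 y]))
    rw [← hfd, dist_eq_norm] at this
    have h2 : ‖fderiv ℝ (u n) x‖ ≤ ‖fderiv ℝ (u n) x - fderiv ℝ w x‖ + ‖fderiv ℝ w x‖ := by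
      simpa using norm_add_le (fderiv ℝ (u n) x - fderiv ℝ w x) (fderiv ℝ w x)
    have h3 := hM1 x
    linarith
  · intro x
    exact ContDiffBump.convolution_tendsto_right_of_continuous hr0 hw.continuous x
  · intro x
    simp_rw [hfd]
    exact ContDiffBump.convolution_tendsto_right_of_continuous hr0 hdc x

lemma EQ.norm_gradient {N : ℕ} (f : EuclideanSpace ℝ (Fin N) → ℝ) (x) :
    ‖gradient f x‖ = ‖fderiv ℝ f x‖ := by
  simp [gradient]

lemma EQ.sobolev_nonneg (N : ℕ) : 0 ≤ sobolevConst N := by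
  apply Real.sInf_nonneg
  rintro r ⟨φ, -, -, -, rfl⟩
  positivity

lemma EQ.sobolev_smooth {N : ℕ} (hN : 3 ≤ N) (p : ℝ) (hp : p = 2 * (N : ℝ) / ((N : ℝ) - 2))
    (hp0 : 0 < p)
    (φ : EuclideanSpace ℝ (Fin N) → ℝ) (h1 : ContDiff ℝ (⊤ : ℕ∞) φ) (h2 : HasCompactSupport φ) :
    sobolevConst N * (∫ x, |φ x| ^ p) ^ (2 / p) ≤ ∫ x, ‖fderiv ℝ φ x‖ ^ 2 := by
  by_cases h : φ = 0
  · subst h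
    have : (0:ℝ) < 2 / p := by positivity
    simp [Real.zero_rpow hp0.ne', Real.zero_rpow this.ne']
  · obtain ⟨x, hx⟩ := Function.ne_iff.1 h
    have hcont : Continuous (fun x => |φ x| ^ p) :=
      (h1.continuous.abs).rpow_const (fun _ => Or.inr hp0.le)
    have hpos : 0 < ∫ x, |φ x| ^ p := by
      apply integral_pos_of_integrable_nonneg_nonzero (x := x) hcont
      · apply hcont.integrable_of_hasCompactSupport
        apply h2.mono
        intro y hy hy0
        apply hy
        simp only [hy0, abs_zero, Real.zero_rpow hp0.ne']
      · intro y; positivity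
      · simp at hx
        positivity
    rw [← le_div_iff₀ (by positivity)]
    apply csInf_le
    · refine ⟨0, ?_⟩
      rintro r ⟨φ, -, -, -, rfl⟩
      positivity
    · exact ⟨φ, h1, h2, h, by simp only [EQ.norm_gradient, hp]⟩

lemma EQ.sobolev_C1 {N : ℕ} (hN : 3 ≤ N) (p : ℝ) (hp : p = 2 * (N : ℝ) / ((N : ℝ) - 2))
    (hp0 : 0 < p)
    (w : EuclideanSpace ℝ (Fin N) → ℝ) (h1 : ContDiff ℝ 1 w) (h2 : HasCompactSupport w) :
    sobolevConst N * (∫ x, |w x| ^ p) ^ (2 / p) ≤ ∫ x, ‖fderiv ℝ w x‖ ^ 2 := by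
  obtain ⟨u, K, M, hK, hM, hu, huc, hu0, hd0, huM, hdM, hul, hdl⟩ := EQ.approx w h1 h2
  have hp2 : (0:ℝ) < 2 / p := by positivity
  have A : Tendsto (fun n => ∫ x, |u n x| ^ p) atTop (𝓝 (∫ x, |w x| ^ p)) := by
    apply tendsto_integral_of_dominated_convergence (K.indicator fun _ => M ^ p)
    · intro n
      exact (((hu n).continuous.abs).rpow_const (fun _ => Or.inr hp0.le)).aestronglyMeasurable
    · rw [integrable_indicator_iff hK.measurableSet]
      exact integrableOn_const hK.measure_lt_top.ne
    · intro n
      refine Eventually.of_forall fun x => ?_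
      by_cases hx : x ∈ K
      · rw [Set.indicator_of_mem hx, Real.norm_of_nonneg (by positivity)]
        exact Real.rpow_le_rpow (abs_nonneg _) (huM n x) hp0.le
      · simp [Set.indicator_of_notMem hx, hu0 n x hx, Real.zero_rpow hp0.ne']
    · exact Eventually.of_forall fun x => (hul x).abs.rpow_const (Or.inr hp0.le)
  have B : Tendsto (fun n => ∫ x, ‖fderiv ℝ (u n) x‖ ^ 2) atTop
      (𝓝 (∫ x, ‖fderiv ℝ w x‖ ^ 2)) := by
    apply tendsto_integral_of_dominated_convergence (K.indicator fun _ => M ^ 2)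
    · intro n
      exact (((hu n).continuous_fderiv (by simp)).norm.pow 2).aestronglyMeasurable
    · rw [integrable_indicator_iff hK.measurableSet]
      exact integrableOn_const hK.measure_lt_top.ne
    · intro n
      refine Eventually.of_forall fun x => ?_
      by_cases hx : x ∈ K
      · rw [Set.indicator_of_mem hx, Real.norm_of_nonneg (by positivity)]
        exact pow_le_pow_left₀ (norm_nonneg _) (hdM n x) 2
      · simp [Set.indicator_of_notMem hx, hd0 n x hx]
    · exact Eventually.of_forall fun x => (hdl x).norm.pow 2
  exact le_of_tendsto_of_tendsto' ((A.rpow_const (Or.inr hp2.le)).const_mul _) B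
    fun n => EQ.sobolev_smooth hN p hp hp0 (u n) (hu n) (huc n)

lemma EQ.cutoff (N : ℕ) :
    ∃ (η : ℕ → EuclideanSpace ℝ (Fin N) → ℝ) (L : ℝ), 0 ≤ L ∧
      (∀ n, ContDiff ℝ (⊤ : ℕ∞) (η n)) ∧ (∀ n, HasCompactSupport (η n)) ∧
      (∀ n x, |η n x| ≤ 1) ∧ (∀ n x, ‖fderiv ℝ (η n) x‖ ≤ L * (1 + ‖x‖)⁻¹) ∧
      (∀ x, Tendsto (fun n => η n x) atTop (𝓝 1)) ∧
      (∀ x, Tendsto (fun n => fderiv ℝ (η n) x) atTop (𝓝 0)) := by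
  let χ : ContDiffBump (0 : EuclideanSpace ℝ (Fin N)) := ⟨1, 2, by norm_num, by norm_num⟩
  have hχ : ContDiff ℝ (⊤ : ℕ∞) χ := χ.contDiff
  have hdc : Continuous (fderiv ℝ χ) := hχ.continuous_fderiv (by simp)
  obtain ⟨M, hM⟩ := hdc.bounded_above_of_compact_support (χ.hasCompactSupport.fderiv ℝ)
  have h0 : 0 ≤ M := (norm_nonneg _).trans (hM 0)
  let a : ℕ → ℝ := fun n => 1 / ((n : ℝ) + 1)
  have ha0 : ∀ n, 0 < a n := fun n => by positivity
  have ha1 : ∀ n, a n ≤ 1 := fun n => by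
    show 1 / ((n : ℝ) + 1) ≤ 1
    rw [div_le_one (by positivity)]
    linarith [(Nat.cast_nonneg n : (0:ℝ) ≤ n)]
  have hal : Tendsto a atTop (𝓝 0) := tendsto_one_div_add_atTop_nhds_zero_nat
  have hfd : ∀ n x, fderiv ℝ (fun x => χ (a n • x)) x = a n • fderiv ℝ χ (a n • x) := by
    intro n x
    exact fderiv_comp_smul (f := χ) (a n)
  refine ⟨fun n x => χ (a n • x), 3 * M, by positivity, ?_, ?_, ?_, ?_, ?_, ?_⟩
  · intro n
    exact hχ.comp (contDiff_const_smul _)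
  · intro n
    exact χ.hasCompactSupport.comp_smul (ha0 n).ne'
  · intro n x
    rw [abs_of_nonneg χ.nonneg]
    exact χ.le_one
  · intro n x
    rw [hfd, norm_smul, Real.norm_of_nonneg (ha0 n).le, ← div_eq_mul_inv,
      le_div_iff₀ (by positivity)]
    by_cases h : a n * ‖x‖ ≤ 2
    · have := hM (a n • x)
      have h3 : a n * (1 + ‖x‖) ≤ 3 := by linarith [ha1 n]
      calc a n * ‖fderiv ℝ χ (a n • x)‖ * (1 + ‖x‖)
          = (a n * (1 + ‖x‖)) * ‖fderiv ℝ χ (a n • x)‖ := by ring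
        _ ≤ 3 * M := by gcongr
    · have : fderiv ℝ χ (a n • x) = 0 := by
        apply fderiv_of_notMem_tsupport
        rw [χ.tsupport_eq, mem_closedBall_zero_iff, norm_smul, Real.norm_of_nonneg (ha0 n).le]
        exact h
      rw [this]; simp; positivity
  · intro x
    have h1 : χ 0 = 1 := χ.one_of_mem_closedBall (by simp [χ])
    have : Tendsto (fun n => a n • x) atTop (𝓝 0) := by simpa using hal.smul_const x
    simpa [h1, Function.comp_def] using (χ.continuous.tendsto 0).comp this
  · intro x
    simp_rw [hfd]
    apply squeeze_zero_norm (a := fun n => a n * M)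
    · intro n
      rw [norm_smul, Real.norm_of_nonneg (ha0 n).le]
      exact mul_le_mul_of_nonneg_left (hM _) (ha0 n).le
    · simpa using hal.mul_const M

lemma EQ.norm_sq_dual {N : ℕ} (T : EuclideanSpace ℝ (Fin N) →L[ℝ] ℝ) :
    ∑ i, T (EuclideanSpace.single i 1) * T (EuclideanSpace.single i 1) = ‖T‖ ^ 2 := by
  obtain ⟨g, rfl⟩ := (InnerProductSpace.toDual ℝ (EuclideanSpace ℝ (Fin N))).surjective T
  rw [LinearIsometryEquiv.norm_map, EuclideanSpace.real_norm_sq_eq]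
  refine Finset.sum_congr rfl fun i _ => ?_
  rw [InnerProductSpace.toDual_apply_apply, EuclideanSpace.inner_single_right]
  simp [sq]

lemma EQ.ibp {N : ℕ} (v w : EuclideanSpace ℝ (Fin N) → ℝ) (hv : ContDiff ℝ 2 v)
    (hw : ContDiff ℝ 1 w) (hc : HasCompactSupport w) :
    ∫ x, ∑ i, fderiv ℝ v x (EuclideanSpace.single i 1) * fderiv ℝ w x (EuclideanSpace.single i 1)
      = ∫ x, -lap v x * w x := by
  have hdw : Continuous (fderiv ℝ w) := hw.continuous_fderiv one_ne_zero
  have hdv1 : ContDiff ℝ 1 (fderiv ℝ v) := hv.fderiv_right (by norm_num)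
  have hdd : Continuous (fderiv ℝ (fderiv ℝ v)) := hdv1.continuous_fderiv one_ne_zero
  have key : ∀ (x : EuclideanSpace ℝ (Fin N)) (e : EuclideanSpace ℝ (Fin N)),
      fderiv ℝ (fun y => fderiv ℝ v y e) x e = fderiv ℝ (fderiv ℝ v) x e e := by
    intro x e
    rw [fderiv_clm_apply (hdv1.differentiable one_ne_zero x) (differentiableAt_const e)]
    simp
  have I1 : ∀ e : EuclideanSpace ℝ (Fin N),
      Integrable (fun x => fderiv ℝ v x e * fderiv ℝ w x e) := by
    intro e
    apply Continuous.integrable_of_hasCompactSupport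
    · exact (hdv1.continuous.clm_apply continuous_const).mul (hdw.clm_apply continuous_const)
    · exact (hc.fderiv_apply ℝ e).mul_left
  have I2 : ∀ e : EuclideanSpace ℝ (Fin N),
      Integrable (fun x => fderiv ℝ (fderiv ℝ v) x e e * w x) := by
    intro e
    apply Continuous.integrable_of_hasCompactSupport
    · exact ((hdd.clm_apply continuous_const).clm_apply continuous_const).mul hw.continuous
    · exact hc.mul_left
  have I3 : ∀ e : EuclideanSpace ℝ (Fin N), Integrable (fun x => fderiv ℝ v x e * w x) := by
    intro e
    apply Continuous.integrable_of_hasCompactSupport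
    · exact (hdv1.continuous.clm_apply continuous_const).mul hw.continuous
    · exact hc.mul_left
  rw [integral_finsetSum _ (fun i _ => I1 _)]
  have h : ∀ x, -lap v x * w x = ∑ i : Fin N, -(fderiv ℝ (fderiv ℝ v) x
      (EuclideanSpace.single i 1) (EuclideanSpace.single i 1) * w x) := by
    intro x
    simp only [lap, iteratedFDeriv_two_apply, Finset.sum_neg_distrib, Finset.sum_mul, neg_mul]
    simp
  simp_rw [h]
  rw [integral_finsetSum Finset.univ (f := fun (i : Fin N) x => -(fderiv ℝ (fderiv ℝ v) x
      (EuclideanSpace.single i 1) (EuclideanSpace.single i 1) * w x)) (fun i _ => (I2 _).neg)]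
  refine Finset.sum_congr rfl fun i _ => ?_
  rw [integral_neg]
  have := integral_mul_fderiv_eq_neg_fderiv_mul_of_integrable (𝕜 := ℝ) (μ := volume)
    (f := fun y => fderiv ℝ v y (EuclideanSpace.single i 1)) (g := w)
    (v := EuclideanSpace.single i 1) (by simpa only [key] using I2 _) (I1 _) (I3 _)
    (fun x _ => ((hdv1.differentiable one_ne_zero x).clm_apply (differentiableAt_const _)))
    (fun x _ => hw.differentiable one_ne_zero x)
  simpa only [key] using this

theorem energy_quantization {N : ℕ} (hN : 3 ≤ N)
    (v : EuclideanSpace ℝ (Fin N) → ℝ) (hv : ContDiff ℝ 2 v) (hvne : v ≠ 0)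
    (heq : ∀ x, -lap v x = |v x| ^ (2 * (N : ℝ) / ((N : ℝ) - 2) - 2) * v x)
    (C : ℝ) (hC : 0 < C)
    (hdecay : ∀ x, |v x| ≤ C * (1 + ‖x‖) ^ (-((N : ℝ) - 2)))
    (hgrad_decay : ∀ x, ‖gradient v x‖ ≤ C * (1 + ‖x‖) ^ (-((N : ℝ) - 1))) :
    sobolevConst N ^ ((N : ℝ) / 2) ≤ ∫ x, ‖gradient v x‖ ^ 2 := by
  simp_rw [EQ.norm_gradient] at hgrad_decay ⊢
  have hN3 : (3:ℝ) ≤ N := by exact_mod_cast hN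
  obtain ⟨p, hp⟩ : ∃ p : ℝ, p = 2 * (N : ℝ) / ((N : ℝ) - 2) := ⟨_, rfl⟩
  rw [← hp] at heq
  have hN2 : (0:ℝ) < (N:ℝ) - 2 := by linarith
  have hpN : p * ((N:ℝ) - 2) = 2 * N := by rw [hp]; field_simp
  have hp0 : 0 < p := by rw [hp]; positivity
  have hp2 : 2 / p = 1 - 2 / (N:ℝ) := by rw [hp]; field_simp
  obtain ⟨η, L, hL, hη, hηc, hη1, hηd, hηl, hηdl⟩ := EQ.cutoff N
  have hv1 : ContDiff ℝ 1 v := hv.of_le (by norm_num)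
  have hdv : Continuous (fderiv ℝ v) := hv1.continuous_fderiv one_ne_zero
  have hη' : ∀ n, ContDiff ℝ 1 (η n) := fun n => (hη n).of_le (by norm_cast)
  let w : ℕ → EuclideanSpace ℝ (Fin N) → ℝ := fun n x => v x * η n x
  have hw : ∀ n, ContDiff ℝ 1 (w n) := fun n => hv1.mul (hη' n)
  have hwc : ∀ n, HasCompactSupport (w n) := fun n => (hηc n).mul_left
  have hdw : ∀ n x, fderiv ℝ (w n) x = v x • fderiv ℝ (η n) x + η n x • fderiv ℝ v x :=
    fun n x => fderiv_fun_mul (hv1.differentiable one_ne_zero x)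
      ((hη' n).differentiable one_ne_zero x)
  have hwl : ∀ x, Tendsto (fun n => w n x) atTop (𝓝 (v x)) := fun x => by
    simpa using (hηl x).const_mul (v x)
  have hdwl : ∀ x, Tendsto (fun n => fderiv ℝ (w n) x) atTop (𝓝 (fderiv ℝ v x)) := fun x => by
    simp_rw [hdw]
    simpa using ((hηdl x).const_smul (v x)).add ((hηl x).smul_const (fderiv ℝ v x))
  have hwb : ∀ n x, |w n x| ≤ |v x| := fun n x => by
    show |v x * η n x| ≤ _
    rw [abs_mul]
    exact mul_le_of_le_one_right (abs_nonneg _) (hη1 n x)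
  let g : EuclideanSpace ℝ (Fin N) → ℝ := fun x => (1 + ‖x‖) ^ (-((N : ℝ) - 1))
  have hg0 : ∀ x, 0 ≤ g x := fun x => by positivity
  have hdwb : ∀ n x, ‖fderiv ℝ (w n) x‖ ≤ (C * L + C) * g x := fun n x => by
    rw [hdw]
    have e1 : (1 + ‖x‖) ^ (-((N : ℝ) - 2)) * (1 + ‖x‖)⁻¹ = g x := by
      rw [← Real.rpow_neg_one, ← Real.rpow_add (by positivity)]
      congr 1; ring
    calc _ ≤ ‖v x • fderiv ℝ (η n) x‖ + ‖η n x • fderiv ℝ v x‖ := norm_add_le _ _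
      _ ≤ (C * (1 + ‖x‖) ^ (-((N : ℝ) - 2))) * (L * (1 + ‖x‖)⁻¹) + 1 * (C * g x) := by
        rw [norm_smul, norm_smul, Real.norm_eq_abs, Real.norm_eq_abs]
        gcongr
        · exact hdecay x
        · exact hηd n x
        · exact hη1 n x
        · exact hgrad_decay x
      _ = C * L * ((1 + ‖x‖) ^ (-((N : ℝ) - 2)) * (1 + ‖x‖)⁻¹) + C * g x := by ring
      _ = _ := by rw [e1]; ring
  have hgi : Integrable (fun x => g x ^ 2) := by
    have := integrable_one_add_norm (E := EuclideanSpace ℝ (Fin N)) (μ := volume)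
      (r := 2 * ((N:ℝ) - 1)) (by simp; linarith)
    convert! this using 2 with x
    rw [← Real.rpow_natCast, ← Real.rpow_mul (by positivity)]
    congr 1; push_cast; ring
  have hcp : Continuous (fun x => |v x| ^ p) :=
    (hv.continuous.abs).rpow_const (fun _ => Or.inr hp0.le)
  have hvi : Integrable (fun x => |v x| ^ p) := by
    have := (integrable_one_add_norm (E := EuclideanSpace ℝ (Fin N)) (μ := volume)
      (r := 2 * (N:ℝ)) (by simp; linarith)).const_mul (C ^ p)
    refine this.mono' hcp.aestronglyMeasurable (Eventually.of_forall fun x => ?_)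
    rw [Real.norm_of_nonneg (by positivity)]
    calc |v x| ^ p ≤ (C * (1 + ‖x‖) ^ (-((N : ℝ) - 2))) ^ p :=
          Real.rpow_le_rpow (abs_nonneg _) (hdecay x) hp0.le
      _ = _ := by
        rw [Real.mul_rpow hC.le (by positivity), ← Real.rpow_mul (by positivity)]
        congr 2; linarith
  have T1 : Tendsto (fun n => ∫ x, |w n x| ^ p) atTop (𝓝 (∫ x, |v x| ^ p)) := by
    apply tendsto_integral_of_dominated_convergence (fun x => |v x| ^ p)
    · intro n
      exact (((hw n).continuous.abs).rpow_const (fun _ => Or.inr hp0.le)).aestronglyMeasurable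
    · exact hvi
    · intro n
      refine Eventually.of_forall fun x => ?_
      rw [Real.norm_of_nonneg (by positivity)]
      exact Real.rpow_le_rpow (abs_nonneg _) (hwb n x) hp0.le
    · exact Eventually.of_forall fun x => (hwl x).abs.rpow_const (Or.inr hp0.le)
  have T2 : Tendsto (fun n => ∫ x, ‖fderiv ℝ (w n) x‖ ^ 2) atTop
      (𝓝 (∫ x, ‖fderiv ℝ v x‖ ^ 2)) := by
    apply tendsto_integral_of_dominated_convergence (fun x => (C * L + C) ^ 2 * g x ^ 2)
    · intro n
      exact (((hw n).continuous_fderiv one_ne_zero).norm.pow 2).aestronglyMeasurable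
    · exact hgi.const_mul _
    · intro n
      refine Eventually.of_forall fun x => ?_
      rw [Real.norm_of_nonneg (by positivity), ← mul_pow]
      exact pow_le_pow_left₀ (norm_nonneg _) (hdwb n x) 2
    · exact Eventually.of_forall fun x => (hdwl x).norm.pow 2
  have T3 : Tendsto (fun n => ∫ x, ∑ i, fderiv ℝ v x (EuclideanSpace.single i 1) *
      fderiv ℝ (w n) x (EuclideanSpace.single i 1)) atTop (𝓝 (∫ x, ‖fderiv ℝ v x‖ ^ 2)) := by
    simp_rw [← EQ.norm_sq_dual]
    apply tendsto_integral_of_dominated_convergence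
      (fun x => ((N:ℝ) * (C * (C * L + C))) * g x ^ 2)
    · intro n
      apply Continuous.aestronglyMeasurable
      refine continuous_finsetSum _ fun i _ => ?_
      exact (hdv.clm_apply continuous_const).mul
        (((hw n).continuous_fderiv one_ne_zero).clm_apply continuous_const)
    · exact hgi.const_mul _
    · intro n
      refine Eventually.of_forall fun x => ?_
      refine (norm_sum_le _ _).trans ?_
      have : ∀ i ∈ (Finset.univ : Finset (Fin N)), ‖fderiv ℝ v x (EuclideanSpace.single i 1) *
          fderiv ℝ (w n) x (EuclideanSpace.single i 1)‖ ≤ (C * g x) * ((C * L + C) * g x) := by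
        intro i _
        rw [norm_mul]
        have h1 := (fderiv ℝ v x).le_opNorm (EuclideanSpace.single i 1)
        have h2 := (fderiv ℝ (w n) x).le_opNorm (EuclideanSpace.single i 1)
        simp only [EuclideanSpace.norm_single, norm_one, mul_one] at h1 h2
        exact mul_le_mul (h1.trans (hgrad_decay x)) (h2.trans (hdwb n x)) (norm_nonneg _)
          (mul_nonneg hC.le (hg0 x))
      refine (Finset.sum_le_card_nsmul _ _ _ this).trans (le_of_eq ?_)
      simp only [Finset.card_univ, Fintype.card_fin, nsmul_eq_mul]
      ring
    · refine Eventually.of_forall fun x => ?_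
      refine tendsto_finsetSum _ fun i _ => ?_
      exact (((ContinuousLinearMap.apply ℝ ℝ (EuclideanSpace.single i (1:ℝ))).continuous.tendsto
        (fderiv ℝ v x)).comp (hdwl x)).const_mul _
  have T4 : Tendsto (fun n => ∫ x, -lap v x * w n x) atTop (𝓝 (∫ x, |v x| ^ p)) := by
    have e : ∀ n x, -lap v x * w n x = |v x| ^ p * η n x := by
      intro n x
      rw [heq]
      show _ * (v x * η n x) = _
      by_cases h : v x = 0
      · simp [h, Real.zero_rpow hp0.ne']
      · have h' : 0 < |v x| := abs_pos.2 h
        rw [Real.rpow_sub h', Real.rpow_two, sq_abs]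
        field_simp
    simp_rw [e]
    apply tendsto_integral_of_dominated_convergence (fun x => |v x| ^ p)
    · intro n
      exact (hcp.mul (hη' n).continuous).aestronglyMeasurable
    · exact hvi
    · intro n
      refine Eventually.of_forall fun x => ?_
      rw [norm_mul, Real.norm_of_nonneg (by positivity)]
      exact mul_le_of_le_one_right (by positivity) (hη1 n x)
    · refine Eventually.of_forall fun x => ?_
      simpa using (hηl x).const_mul (|v x| ^ p)
  have hAB : ∫ x, ‖fderiv ℝ v x‖ ^ 2 = ∫ x, |v x| ^ p := by
    refine tendsto_nhds_unique T3 ?_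
    simp_rw [fun n => EQ.ibp v (w n) hv (hw n) (hwc n)]
    exact T4
  have hS : sobolevConst N * (∫ x, |v x| ^ p) ^ (2 / p) ≤ ∫ x, ‖fderiv ℝ v x‖ ^ 2 := by
    refine le_of_tendsto_of_tendsto' ((T1.rpow_const (Or.inr (by positivity))).const_mul _) T2
      fun n => EQ.sobolev_C1 hN p hp hp0 (w n) (hw n) (hwc n)
  obtain ⟨x0, hx0⟩ := Function.ne_iff.1 hvne
  have hB : 0 < ∫ x, |v x| ^ p := by
    apply integral_pos_of_integrable_nonneg_nonzero (x := x0) hcp hvi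
    · intro y; positivity
    · simp at hx0
      positivity
  rw [← hAB] at hB hS
  generalize (∫ x, ‖fderiv ℝ v x‖ ^ 2) = A at hB hS ⊢
  have hS2 : sobolevConst N ≤ A ^ (2 / (N:ℝ)) := by
    rw [← le_div_iff₀ (by positivity)] at hS
    refine hS.trans (le_of_eq ?_)
    rw [hp2, Real.rpow_sub hB, Real.rpow_one]
    field_simp
  calc sobolevConst N ^ ((N:ℝ) / 2) ≤ (A ^ (2 / (N:ℝ))) ^ ((N:ℝ) / 2) :=
        Real.rpow_le_rpow (EQ.sobolev_nonneg N) hS2 (by positivity)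
    _ = A := by
      rw [← Real.rpow_mul hB.le, show 2 / (N:ℝ) * ((N:ℝ) / 2) = 1 by field_simp, Real.rpow_one]
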